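/- arXiv:1407.0615 — 2 statements merged into one kernel-verified Lean document; each statement's English description precedes it below -/
import Mathlib

section
/- Let ν be a real number with ν ≥ 1. For every real z with 0 < z ≤ ν one has J_{ν−1}(z) − J_ν(z) > 0; in particular, the first positive zero λ⁻_{ν−1,1} of the function z ↦ J_{ν−1}(z) − J_ν(z) satisfies λ⁻_{ν−1,1} > ν. -/
/-- Bessel function of the first kind of real order `ν`, defined via its power series
`J_ν(z) = ∑ₘ (−1)^m / (m! Γ(ν+m+1)) (z/2)^(ν+2m)` (with real-exponent powers). -/
noncomputable def besselJ (ν z : ℝ) : ℝ :=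
  ∑' m : ℕ, ((-1 : ℝ) ^ m / (Nat.factorial m * Real.Gamma (ν + m + 1))) *
    (z / 2) ^ (ν + 2 * (m : ℝ))

/-- `x` (indexed by `k ≥ 1`) enumerates the positive zeroes of `f`: it is strictly
increasing on indices `k ≥ 1`, each `x k` is a positive zero of `f`, and every positive
zero of `f` is some `x k`. -/
def EnumPosZeros (f : ℝ → ℝ) (x : ℕ → ℝ) : Prop :=
  StrictMonoOn x (Set.Ici 1) ∧ (∀ k, 1 ≤ k → 0 < x k ∧ f (x k) = 0) ∧
    ∀ z : ℝ, 0 < z → f z = 0 → ∃ k, 1 ≤ k ∧ x k = z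

/-!
Read downwards in the order, the recurrence `J_{ν-1}(z) = (2ν/z) J_ν(z) - J_{ν+1}(z)` preserves
strict decrease in the order as long as `z ≤ ν`: if `0 < J_{ν+1}(z) < J_ν(z)`, then
`J_{ν-1}(z) ≥ 2 J_ν(z) - J_{ν+1}(z) > J_ν(z)`. For fixed `z > 0` and large order the defining
series alternates with decreasing terms, so its first two partial sums already give
`0 < J_ν(z) < J_{ν-1}(z)`; descending from there in unit steps reaches every `ν ≥ z`.
-/

open Filter

/-- The `m`-th term of the power series of `J_ν(z)` without its sign `(-1) ^ m`. At a pole of the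
Gamma function `Real.Gamma` is `0`, so that the term vanishes there, in accordance with the usual
convention `1 / Γ = 0`. -/
noncomputable def besselJTerm (ν z : ℝ) (m : ℕ) : ℝ :=
  (z / 2) ^ (ν + 2 * (m : ℝ)) / (m.factorial * Real.Gamma (ν + m + 1))

theorem besselJ_eq_tsum (ν z : ℝ) : besselJ ν z = ∑' m : ℕ, (-1) ^ m * besselJTerm ν z m :=
  tsum_congr fun m => by rw [besselJTerm]; ring

theorem inv_Gamma_eq_mul_inv_Gamma_add_one (s : ℝ) :
    (Real.Gamma s)⁻¹ = s * (Real.Gamma (s + 1))⁻¹ := by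
  rcases eq_or_ne s 0 with rfl | hs
  · simp [Real.Gamma_zero]
  · rw [Real.Gamma_add_one hs, mul_inv, mul_inv_cancel_left₀ hs]

section Term

variable {ν z : ℝ}

theorem besselJTerm_pos (hν : -1 < ν) (hz : 0 < z) (m : ℕ) : 0 < besselJTerm ν z m := by
  have hGamma : 0 < Real.Gamma (ν + m + 1) :=
    Real.Gamma_pos_of_pos (by linarith [m.cast_nonneg (α := ℝ)])
  unfold besselJTerm
  positivity

theorem besselJTerm_sub_one_mul (hz : z ≠ 0) (m : ℕ) :
    besselJTerm (ν - 1) z m * (z / 2) = (ν + m) * besselJTerm ν z m := by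
  have hpow : (z / 2) ^ (ν - 1 + 2 * (m : ℝ)) * (z / 2) = (z / 2) ^ (ν + 2 * (m : ℝ)) := by
    rw [← Real.rpow_add_one (div_ne_zero hz two_ne_zero)]
    ring_nf
  have hGamma := inv_Gamma_eq_mul_inv_Gamma_add_one (ν + m)
  have harg : ν - 1 + m + 1 = ν + m := by ring
  rw [besselJTerm, besselJTerm, harg, ← hpow]
  simp only [div_eq_mul_inv, mul_inv, hGamma]
  ring

theorem besselJTerm_add_one_mul (hz : z ≠ 0) (m : ℕ) :
    besselJTerm (ν + 1) z m * (z / 2) = (m + 1) * besselJTerm ν z (m + 1) := by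
  have hpow : (z / 2) ^ (ν + 1 + 2 * (m : ℝ)) * (z / 2) =
      (z / 2) ^ (ν + 2 * ((m + 1 : ℕ) : ℝ)) := by
    rw [← Real.rpow_add_one (div_ne_zero hz two_ne_zero)]
    push_cast
    ring_nf
  have harg : ν + ((m + 1 : ℕ) : ℝ) + 1 = ν + 1 + m + 1 := by push_cast; ring
  rw [besselJTerm, besselJTerm, harg, ← hpow, Nat.factorial_succ]
  push_cast
  field_simp

theorem mul_besselJTerm_succ (hz : z ≠ 0) (m : ℕ) :
    (m + 1) * (ν + m + 1) * besselJTerm ν z (m + 1) = (z / 2) ^ 2 * besselJTerm ν z m := by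
  have hraise := besselJTerm_add_one_mul (ν := ν) hz m
  have hlower := besselJTerm_sub_one_mul (ν := ν + 1) hz m
  rw [add_sub_cancel_right] at hlower
  linear_combination (-(ν + m + 1)) * hraise - (z / 2) * hlower

theorem summable_neg_one_pow_mul_besselJTerm (hz : z ≠ 0) :
    Summable fun m : ℕ => (-1) ^ m * besselJTerm ν z m := by
  refine summable_of_ratio_norm_eventually_le (r := 1 / 2) (by norm_num) ?_
  have hcast : Tendsto (fun m : ℕ => (m : ℝ)) atTop atTop := tendsto_natCast_atTop_atTop
  filter_upwards [hcast.eventually_ge_atTop (2 * (z / 2) ^ 2), hcast.eventually_ge_atTop (-ν)]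
    with m hm hmν
  have hm₀ : (0 : ℝ) ≤ m := m.cast_nonneg
  have hcoeff_pos : 0 < (m + 1) * (ν + m + 1) := mul_pos (by linarith) (by linarith)
  have hcoeff : 2 * (z / 2) ^ 2 ≤ (m + 1) * (ν + m + 1) := by nlinarith [hm₀]
  have hratio : (m + 1) * (ν + m + 1) * |besselJTerm ν z (m + 1)| =
      (z / 2) ^ 2 * |besselJTerm ν z m| := by
    rw [← abs_of_pos hcoeff_pos, ← abs_mul, mul_besselJTerm_succ hz, abs_mul, abs_sq]
  simp only [norm_mul, norm_pow, norm_neg, norm_one, one_pow, one_mul, Real.norm_eq_abs]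
  refine le_of_mul_le_mul_left ?_ hcoeff_pos
  calc
    (m + 1) * (ν + m + 1) * |besselJTerm ν z (m + 1)| = (z / 2) ^ 2 * |besselJTerm ν z m| := hratio
    _ ≤ (m + 1) * (ν + m + 1) / 2 * |besselJTerm ν z m| := by gcongr; linarith
    _ = (m + 1) * (ν + m + 1) * (1 / 2 * |besselJTerm ν z m|) := by ring

theorem hasSum_besselJ (hz : z ≠ 0) :
    HasSum (fun m : ℕ => (-1) ^ m * besselJTerm ν z m) (besselJ ν z) :=
  besselJ_eq_tsum ν z ▸ (summable_neg_one_pow_mul_besselJTerm hz).hasSum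

theorem antitone_besselJTerm (hz : 0 < z) (h : (z / 2) ^ 2 ≤ ν + 1) :
    Antitone (besselJTerm ν z) := by
  have hν : -1 < ν := by linarith [pow_pos (half_pos hz) 2]
  refine antitone_nat_of_succ_le fun m => ?_
  have hm₀ : (0 : ℝ) ≤ m := m.cast_nonneg
  have hcoeff_pos : 0 < (m + 1) * (ν + m + 1) := mul_pos (by linarith) (by linarith)
  have hcoeff : (z / 2) ^ 2 ≤ (m + 1) * (ν + m + 1) := by nlinarith [hm₀]
  refine le_of_mul_le_mul_left ?_ hcoeff_pos
  rw [mul_besselJTerm_succ hz.ne']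
  exact mul_le_mul_of_nonneg_right hcoeff (besselJTerm_pos hν hz m).le

end Term

theorem besselJ_sub_one_add_besselJ_add_one (ν : ℝ) {z : ℝ} (hz : z ≠ 0) :
    besselJ (ν - 1) z + besselJ (ν + 1) z = 2 * ν / z * besselJ ν z := by
  have hlower : HasSum (fun m : ℕ => (-1) ^ m * ((ν + m) * besselJTerm ν z m))
      (besselJ (ν - 1) z * (z / 2)) := by
    simpa only [mul_assoc, besselJTerm_sub_one_mul hz] using
      (hasSum_besselJ (ν := ν - 1) hz).mul_right (z / 2)
  have hraise : HasSum (fun m : ℕ => (-1) ^ m * ((m + 1) * besselJTerm ν z (m + 1)))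
      (besselJ (ν + 1) z * (z / 2)) := by
    simpa only [mul_assoc, besselJTerm_add_one_mul hz] using
      (hasSum_besselJ (ν := ν + 1) hz).mul_right (z / 2)
  have hshift : HasSum (fun m : ℕ => (-1) ^ m * (m * besselJTerm ν z m))
      (-(besselJ (ν + 1) z * (z / 2))) := by
    rw [← hasSum_nat_add_iff' 1]
    simpa [pow_succ] using hraise.neg
  have hterm (m : ℕ) : (-1) ^ m * ((ν + m) * besselJTerm ν z m) -
      (-1) ^ m * (m * besselJTerm ν z m) = ν * ((-1) ^ m * besselJTerm ν z m) := by ring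
  have hdiff : HasSum (fun m : ℕ => ν * ((-1) ^ m * besselJTerm ν z m))
      (besselJ (ν - 1) z * (z / 2) - -(besselJ (ν + 1) z * (z / 2))) := by
    simpa only [hterm] using hlower.sub hshift
  have hsum := ((hasSum_besselJ hz).mul_left ν).unique hdiff
  field_simp
  linear_combination -2 * hsum

section Bounds

variable {ν z : ℝ}

theorem besselJ_le_besselJTerm_zero (hz : 0 < z) (h : (z / 2) ^ 2 ≤ ν + 1) :
    besselJ ν z ≤ besselJTerm ν z 0 := by
  simpa using (antitone_besselJTerm hz h).tendsto_le_alternating_series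
    (hasSum_besselJ hz.ne').tendsto_sum_nat 0

theorem besselJTerm_zero_sub_besselJTerm_one_le_besselJ (hz : 0 < z) (h : (z / 2) ^ 2 ≤ ν + 1) :
    besselJTerm ν z 0 - besselJTerm ν z 1 ≤ besselJ ν z := by
  simpa [Finset.sum_range_succ, ← sub_eq_add_neg] using
    (antitone_besselJTerm hz h).alternating_series_le_tendsto
      (hasSum_besselJ hz.ne').tendsto_sum_nat 1

theorem besselJ_pos_of_sq_lt (hz : 0 < z) (h : (z / 2) ^ 2 < ν + 1) :
    0 < besselJ ν z := by
  have hν : -1 < ν := by linarith [pow_pos (half_pos hz) 2]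
  have hratio : (ν + 1) * besselJTerm ν z 1 = (z / 2) ^ 2 * besselJTerm ν z 0 := by
    simpa using mul_besselJTerm_succ (ν := ν) hz.ne' 0
  have hterm : besselJTerm ν z 1 < besselJTerm ν z 0 := by
    nlinarith [besselJTerm_pos hν hz 0]
  linarith [besselJTerm_zero_sub_besselJTerm_one_le_besselJ hz h.le]

theorem besselJ_lt_besselJ_sub_one_of_sq_add_lt (hz : 0 < z) (h : (z / 2) ^ 2 + z / 2 < ν) :
    besselJ ν z < besselJ (ν - 1) z := by
  have hν : 0 < ν := lt_trans (by positivity) h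
  have hterm_zero : besselJTerm (ν - 1) z 0 * (z / 2) = ν * besselJTerm ν z 0 := by
    simpa using besselJTerm_sub_one_mul (ν := ν) hz.ne' 0
  have hterm_one : besselJTerm (ν - 1) z 1 = besselJTerm ν z 0 * (z / 2) := by
    simpa using (besselJTerm_add_one_mul (ν := ν - 1) hz.ne' 0).symm
  have hpos : 0 < besselJTerm ν z 0 := besselJTerm_pos (by linarith) hz 0
  calc
    besselJ ν z ≤ besselJTerm ν z 0 := besselJ_le_besselJTerm_zero hz (by linarith)
    _ < besselJTerm (ν - 1) z 0 - besselJTerm (ν - 1) z 1 := by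
      refine lt_of_mul_lt_mul_right ?_ (half_pos hz).le
      rw [sub_mul, hterm_zero, hterm_one]
      nlinarith
    _ ≤ besselJ (ν - 1) z :=
      besselJTerm_zero_sub_besselJTerm_one_le_besselJ hz (by linarith)

theorem besselJ_lt_besselJ_sub_one_of_add_one (hz : 0 < z) (hzν : z ≤ ν)
    (hpos : 0 < besselJ ν z) (hlt : besselJ (ν + 1) z < besselJ ν z) :
    besselJ ν z < besselJ (ν - 1) z := by
  have hcoeff : 2 ≤ 2 * ν / z := by rw [le_div_iff₀ hz]; linarith
  calc
    besselJ ν z < 2 * besselJ ν z - besselJ (ν + 1) z := by linarith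
    _ ≤ 2 * ν / z * besselJ ν z - besselJ (ν + 1) z := by gcongr
    _ = besselJ (ν - 1) z := by rw [← besselJ_sub_one_add_besselJ_add_one ν hz.ne']; ring

theorem besselJ_pos_and_lt_of_add_natCast (hz : 0 < z) (hzν : z ≤ ν) (n : ℕ)
    (h : 0 < besselJ (ν + n) z ∧ besselJ (ν + n) z < besselJ (ν + n - 1) z) :
    0 < besselJ ν z ∧ besselJ ν z < besselJ (ν - 1) z := by
  induction n with
  | zero => simpa using h
  | succ n ih =>
    have horder : ν + ((n + 1 : ℕ) : ℝ) = ν + n + 1 := by push_cast; ring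
    rw [horder, add_sub_cancel_right] at h
    have hpos : 0 < besselJ (ν + n) z := h.1.trans h.2
    have hle : z ≤ ν + n := hzν.trans (le_add_of_nonneg_right n.cast_nonneg)
    exact ih ⟨hpos, besselJ_lt_besselJ_sub_one_of_add_one hz hle hpos h.2⟩

theorem besselJ_lt_besselJ_sub_one (hz : 0 < z) (hzν : z ≤ ν) :
    besselJ ν z < besselJ (ν - 1) z := by
  obtain ⟨n, hn⟩ := exists_nat_gt ((z / 2) ^ 2 + z / 2)
  have hlarge : (z / 2) ^ 2 + z / 2 < ν + n := by linarith
  exact (besselJ_pos_and_lt_of_add_natCast hz hzν n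
    ⟨besselJ_pos_of_sq_lt hz (by linarith),
      besselJ_lt_besselJ_sub_one_of_sq_add_lt hz hlarge⟩).2

end Bounds

theorem stmt0_general (ν : ℝ) (lam : ℕ → ℝ)
    (hlam : EnumPosZeros (fun z => besselJ (ν - 1) z - besselJ ν z) lam) :
    (∀ z : ℝ, 0 < z → z ≤ ν → 0 < besselJ (ν - 1) z - besselJ ν z) ∧ ν < lam 1 := by
  have hdiff_pos (z : ℝ) (hz : 0 < z) (hzν : z ≤ ν) : 0 < besselJ (ν - 1) z - besselJ ν z :=
    sub_pos.2 (besselJ_lt_besselJ_sub_one hz hzν)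
  obtain ⟨hlam_pos, hlam_zero⟩ := hlam.2.1 1 le_rfl
  exact ⟨hdiff_pos, lt_of_not_ge fun hle => (hdiff_pos _ hlam_pos hle).ne' hlam_zero⟩

/-- For `ν ≥ 1` and all `0 < z ≤ ν`, `J_{ν−1}(z) − J_ν(z) > 0`; in particular
the first positive zero `λ⁻_{ν−1,1}` of `z ↦ J_{ν−1}(z) − J_ν(z)` satisfies `λ⁻_{ν−1,1} > ν`. -/
theorem stmt0 (ν : ℝ) (hν : 1 ≤ ν) (lam : ℕ → ℝ)
    (hlam : EnumPosZeros (fun z => besselJ (ν - 1) z - besselJ ν z) lam) :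
    (∀ z : ℝ, 0 < z → z ≤ ν → 0 < besselJ (ν - 1) z - besselJ ν z) ∧ ν < lam 1 :=
  stmt0_general ν lam hlam
end

section
/- Let ν be a real number with ν ≥ 1. For every real z with 0 < z ≤ j_{ν−1,1}, where j_{ν−1,1} is the first positive zero of J_{ν−1}, one has J_{ν−1}(z) + J_ν(z) > 0; in particular z ↦ J_{ν−1}(z) + J_ν(z) has no zero in the interval (0, j_{ν−1,1}]. -/
/-!
Write `J_ν(z) = (z/2)^ν C_ν(-(z/2)²)` with `C_ν` the entire Bessel–Clifford function. Before its
first positive zero `J_{ν-1}` keeps the sign of `C_{ν-1}(0) = 1/Γ(ν)`, so it is positive. Since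
`d/dz (z^ν J_ν(z)) = z^ν J_{ν-1}(z)` and `z^ν J_ν(z)` vanishes at `0`, the function `J_ν` is then
positive up to and including that zero.
-/

open Filter Set

/-- The Taylor coefficients at `0` of the Bessel–Clifford function. Since `Real.Gamma` is `0` at its
poles and `1 / 0 = 0`, they agree with the usual ones, in which `1 / Γ` is entire, for every `ν`. -/
noncomputable def besselCliffordCoeff (ν : ℝ) (m : ℕ) : ℝ :=
  1 / (m.factorial * Real.Gamma (ν + m + 1))

/-- The Bessel–Clifford function `C_ν(t) = ∑ₘ t^m / (m! Γ(ν+m+1))`, the entire factor of the Bessel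
function: `J_ν(z) = (z/2)^ν C_ν(-(z/2)²)`. -/
noncomputable def besselClifford (ν t : ℝ) : ℝ :=
  ∑' m : ℕ, besselCliffordCoeff ν m * t ^ m

theorem besselCliffordCoeff_sub_one (ν : ℝ) (m : ℕ) :
    besselCliffordCoeff (ν - 1) m = (ν + m) * besselCliffordCoeff ν m := by
  simp only [besselCliffordCoeff]
  rw [show ν - 1 + m + 1 = ν + m by ring]
  rcases eq_or_ne (ν + m) 0 with hpole | hne
  · simp [hpole]
  · rw [Real.Gamma_add_one hne]
    field_simp

theorem besselCliffordCoeff_add_one (ν : ℝ) (m : ℕ) :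
    besselCliffordCoeff (ν + 1) m = (m + 1) * besselCliffordCoeff ν (m + 1) := by
  simp only [besselCliffordCoeff, Nat.factorial_succ]
  push_cast
  rw [show ν + 1 + m + 1 = ν + (m + 1) + 1 by ring]
  field_simp

theorem besselCliffordCoeff_eq_mul_succ (ν : ℝ) (m : ℕ) :
    besselCliffordCoeff ν m = (ν + 1 + m) * (m + 1) * besselCliffordCoeff ν (m + 1) := by
  rw [mul_assoc, ← besselCliffordCoeff_add_one, ← besselCliffordCoeff_sub_one, add_sub_cancel_right]

theorem summable_besselClifford (ν t : ℝ) :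
    Summable fun m : ℕ => besselCliffordCoeff ν m * t ^ m := by
  refine summable_of_ratio_norm_eventually_le one_half_lt_one ?_
  have hlarge : ∀ᶠ m : ℕ in atTop, 2 * |t| + |ν| ≤ m :=
    tendsto_natCast_atTop_atTop.eventually_ge_atTop _
  filter_upwards [hlarge] with m hm
  have hfactor : 2 * |t| ≤ |(ν + 1 + m) * (m + 1)| := by
    have hlin : 2 * |t| + 1 ≤ ν + 1 + m := by linarith [neg_abs_le ν]
    refine le_trans ?_ (le_abs_self _)
    nlinarith [abs_nonneg t]
  calc ‖besselCliffordCoeff ν (m + 1) * t ^ (m + 1)‖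
      = |t| * ‖besselCliffordCoeff ν (m + 1) * t ^ m‖ := by
        rw [pow_succ, ← mul_assoc, norm_mul _ t, mul_comm, Real.norm_eq_abs t]
    _ ≤ 1 / 2 * |(ν + 1 + m) * (m + 1)| * ‖besselCliffordCoeff ν (m + 1) * t ^ m‖ := by
        gcongr
        linarith
    _ = 1 / 2 * ‖besselCliffordCoeff ν m * t ^ m‖ := by
        rw [besselCliffordCoeff_eq_mul_succ ν m]
        simp only [norm_mul, abs_mul, Real.norm_eq_abs]
        ring

theorem hasDerivAt_besselClifford (ν t : ℝ) :
    HasDerivAt (besselClifford ν) (besselClifford (ν + 1) t) t := by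
  set R : ℝ := |t| + 1
  have htR : t ∈ Metric.ball (0 : ℝ) R := by simp [R]
  have hcoeff (y : ℝ) (m : ℕ) :
      besselCliffordCoeff ν (m + 1) * ((m + 1 : ℕ) * y ^ (m + 1 - 1)) =
        besselCliffordCoeff (ν + 1) m * y ^ m := by
    rw [besselCliffordCoeff_add_one, Nat.add_sub_cancel]
    push_cast
    ring
  have hsummable (y : ℝ) : Summable fun m : ℕ => besselCliffordCoeff ν m * (m * y ^ (m - 1)) := by
    rw [← summable_nat_add_iff 1]
    exact (summable_besselClifford (ν + 1) y).congr fun m => (hcoeff y m).symm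
  have hderiv := hasDerivAt_tsum_of_isPreconnected (hsummable R).norm Metric.isOpen_ball
    (convex_ball _ _).isPreconnected
    (fun m y _ => (hasDerivAt_pow m y).const_mul (besselCliffordCoeff ν m))
    (fun m y hy => ?_) htR (summable_besselClifford ν t) htR
  · convert! hderiv using 1
    rw [(hsummable t).tsum_eq_zero_add]
    simp only [hcoeff, besselClifford, Nat.cast_zero, zero_mul, mul_zero, zero_add]
  · have hyR : |y| ≤ |R| := (mem_ball_zero_iff.1 hy).le.trans (le_abs_self R)
    simp only [norm_mul, norm_pow, Real.norm_eq_abs]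
    gcongr

theorem continuous_besselClifford (ν : ℝ) : Continuous (besselClifford ν) :=
  continuous_iff_continuousAt.2 fun t => (hasDerivAt_besselClifford ν t).continuousAt

theorem besselClifford_zero (ν : ℝ) : besselClifford ν 0 = 1 / Real.Gamma (ν + 1) := by
  rw [besselClifford, tsum_eq_single 0 fun m hm => by simp [hm]]
  simp [besselCliffordCoeff]

theorem besselClifford_sub_one (ν t : ℝ) :
    besselClifford (ν - 1) t = ν * besselClifford ν t + t * besselClifford (ν + 1) t := by
  have hsum : HasSum (fun m : ℕ => besselCliffordCoeff ν m * t ^ m) (besselClifford ν t) :=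
    (summable_besselClifford ν t).hasSum
  have hsum_deriv : HasSum (fun m : ℕ => m * besselCliffordCoeff ν m * t ^ m)
      (t * besselClifford (ν + 1) t) := by
    rw [← hasSum_nat_add_iff' 1]
    simp only [Finset.range_one, Finset.sum_singleton, Nat.cast_zero, zero_mul, sub_zero]
    refine ((summable_besselClifford (ν + 1) t).hasSum.mul_left t).congr_fun fun m => ?_
    rw [besselCliffordCoeff_add_one, pow_succ]
    push_cast
    ring
  rw [← ((hsum.mul_left ν).add hsum_deriv).tsum_eq, besselClifford]
  refine tsum_congr fun m => ?_
  rw [besselCliffordCoeff_sub_one]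
  ring

theorem hasDerivAt_rpow_mul_besselClifford_neg (ν : ℝ) {t : ℝ} (ht : 0 < t) :
    HasDerivAt (fun s => s ^ ν * besselClifford ν (-s))
      (t ^ (ν - 1) * besselClifford (ν - 1) (-t)) t := by
  have hclifford := (hasDerivAt_besselClifford ν (-t)).comp t (hasDerivAt_neg t)
  refine ((Real.hasDerivAt_rpow_const (Or.inl ht.ne')).mul hclifford).congr_deriv ?_
  have hpow : t ^ ν = t ^ (ν - 1) * t := by rw [← Real.rpow_add_one ht.ne', sub_add_cancel]
  rw [besselClifford_sub_one, hpow]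
  simp only [Function.comp_apply]
  ring

theorem besselJ_eq_rpow_mul_besselClifford (ν : ℝ) {z : ℝ} (hz : 0 < z) :
    besselJ ν z = (z / 2) ^ ν * besselClifford ν (-(z / 2) ^ 2) := by
  rw [besselJ, besselClifford, ← tsum_mul_left]
  refine tsum_congr fun m => ?_
  have hpow : (z / 2) ^ (ν + 2 * (m : ℝ)) = (z / 2) ^ ν * ((z / 2) ^ 2) ^ m := by
    rw [Real.rpow_add (half_pos hz), ← pow_mul, ← Real.rpow_natCast]
    push_cast
    rfl
  rw [hpow, besselCliffordCoeff, neg_pow ((z / 2) ^ 2)]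
  ring

theorem besselJ_zero_right {ν : ℝ} (hν : 0 < ν) : besselJ ν 0 = 0 := by
  have hexp (m : ℕ) : ν + 2 * (m : ℝ) ≠ 0 := by positivity
  simp [besselJ, Real.zero_rpow (hexp _)]

theorem continuousOn_besselJ {ν : ℝ} (hν : 0 < ν) : ContinuousOn (besselJ ν) (Ici 0) := by
  have hcont : Continuous fun z : ℝ => (z / 2) ^ ν * besselClifford ν (-(z / 2) ^ 2) :=
    ((continuous_id.div_const 2).rpow_const fun _ => Or.inr hν.le).mul
      ((continuous_besselClifford ν).comp (by fun_prop))
  refine hcont.continuousOn.congr fun z hz => ?_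
  rcases (mem_Ici.1 hz).eq_or_lt with rfl | hpos
  · simp [besselJ_zero_right hν, Real.zero_rpow hν.ne']
  · exact besselJ_eq_rpow_mul_besselClifford ν hpos

theorem hasDerivAt_rpow_mul_besselJ (ν : ℝ) {z : ℝ} (hz : 0 < z) :
    HasDerivAt (fun x => x ^ ν * besselJ ν x) (z ^ ν * besselJ (ν - 1) z) z := by
  have hsq : HasDerivAt (fun x : ℝ => (x / 2) ^ 2) (z / 2) z :=
    (((hasDerivAt_id' z).div_const 2).pow 2).congr_deriv (by ring)
  have hcomp := ((hasDerivAt_rpow_mul_besselClifford_neg ν (by positivity)).comp z hsq).const_mul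
    (2 ^ ν)
  have hpow {x : ℝ} (hx : 0 < x) : x ^ ν = 2 ^ ν * (x / 2) ^ ν := by
    rw [← Real.mul_rpow zero_le_two (half_pos hx).le, mul_div_cancel₀ x two_ne_zero]
  have hsq_rpow {x : ℝ} (hx : 0 < x) (μ : ℝ) : ((x / 2) ^ 2) ^ μ = (x / 2) ^ μ * (x / 2) ^ μ := by
    rw [sq, Real.mul_rpow (half_pos hx).le (half_pos hx).le]
  refine (hcomp.congr_of_eventuallyEq ?_).congr_deriv ?_
  · filter_upwards [lt_mem_nhds hz] with x hx
    rw [besselJ_eq_rpow_mul_besselClifford ν hx, hpow hx, Function.comp_apply, hsq_rpow hx]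
    ring
  · have hhalf : (z / 2) ^ ν = (z / 2) ^ (ν - 1) * (z / 2) := by
      rw [← Real.rpow_add_one (half_pos hz).ne', sub_add_cancel]
    rw [besselJ_eq_rpow_mul_besselClifford (ν - 1) hz, hpow hz, hsq_rpow hz, hhalf]
    ring

theorem besselJ_pos_of_forall_ne_zero {ν z : ℝ} (hν : -1 < ν) (hz : 0 < z)
    (hne : ∀ x ∈ Ioc 0 z, besselJ ν x ≠ 0) : 0 < besselJ ν z := by
  set f : ℝ → ℝ := fun x => besselClifford ν (-(x / 2) ^ 2) with hf
  have hcont : Continuous f := (continuous_besselClifford ν).comp (by fun_prop)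
  have hf_zero : 0 < f 0 := by
    have hGamma : 0 < Real.Gamma (ν + 1) := Real.Gamma_pos_of_pos (by linarith)
    simpa [hf, besselClifford_zero] using hGamma
  suffices hfz : 0 < f z by
    rw [besselJ_eq_rpow_mul_besselClifford ν hz]
    exact mul_pos (Real.rpow_pos_of_pos (half_pos hz) ν) hfz
  by_contra! hfz
  obtain ⟨x, ⟨hx_nonneg, hxz⟩, hfx⟩ :=
    intermediate_value_Icc' hz.le hcont.continuousOn ⟨hfz, hf_zero.le⟩
  have hx : 0 < x := hx_nonneg.lt_of_ne fun h => hf_zero.ne' (h ▸ hfx)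
  refine hne x ⟨hx, hxz⟩ ?_
  rw [besselJ_eq_rpow_mul_besselClifford ν hx]
  exact mul_eq_zero_of_right _ hfx

theorem besselJ_pos_of_forall_besselJ_sub_one_pos {ν z : ℝ} (hν : 0 < ν) (hz : 0 < z)
    (hpos : ∀ x ∈ Ioo 0 z, 0 < besselJ (ν - 1) x) : 0 < besselJ ν z := by
  have hmono : StrictMonoOn (fun x => x ^ ν * besselJ ν x) (Icc 0 z) := by
    refine strictMonoOn_of_deriv_pos (convex_Icc 0 z) ?_ fun x hx => ?_
    · exact (Real.continuous_rpow_const hν.le).continuousOn.mul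
        ((continuousOn_besselJ hν).mono Icc_subset_Ici_self)
    · rw [interior_Icc] at hx
      rw [(hasDerivAt_rpow_mul_besselJ ν hx.1).deriv]
      exact mul_pos (Real.rpow_pos_of_pos hx.1 ν) (hpos x hx)
  have hprod : 0 < z ^ ν * besselJ ν z := by
    simpa [besselJ_zero_right hν] using
      hmono (left_mem_Icc.2 hz.le) (right_mem_Icc.2 hz.le) hz
  exact pos_of_mul_pos_right hprod (Real.rpow_nonneg hz.le ν)

theorem EnumPosZeros.ne_zero_of_lt_first {f : ℝ → ℝ} {x : ℕ → ℝ} (h : EnumPosZeros f x) {z : ℝ}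
    (hz : 0 < z) (hlt : z < x 1) : f z ≠ 0 := by
  obtain ⟨hmono, -, hall⟩ := h
  intro hfz
  obtain ⟨k, hk, rfl⟩ := hall z hz hfz
  exact hlt.not_ge (hmono.monotoneOn self_mem_Ici hk hk)

theorem stmt8_general {ν z : ℝ} (hν : 0 < ν) (hz : 0 < z)
    (hne : ∀ x ∈ Ioo 0 z, besselJ (ν - 1) x ≠ 0) : 0 < besselJ (ν - 1) z + besselJ ν z := by
  have hν_sub : -1 < ν - 1 := by linarith
  have hpos : 0 < besselJ ν z :=
    besselJ_pos_of_forall_besselJ_sub_one_pos hν hz fun x hx =>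
      besselJ_pos_of_forall_ne_zero hν_sub hx.1 fun y hy => hne y ⟨hy.1, hy.2.trans_lt hx.2⟩
  rcases eq_or_ne (besselJ (ν - 1) z) 0 with hzero | hz_ne
  · rwa [hzero, zero_add]
  · refine add_pos (besselJ_pos_of_forall_ne_zero hν_sub hz fun y hy => ?_) hpos
    rcases hy.2.eq_or_lt with rfl | hlt
    exacts [hz_ne, hne y ⟨hy.1, hlt⟩]

/-- For `ν ≥ 1` and every `0 < z ≤ j_{ν−1,1}`, `J_{ν−1}(z) + J_ν(z) > 0`;
in particular `z ↦ J_{ν−1}(z) + J_ν(z)` has no zero in `(0, j_{ν−1,1}]`. -/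
theorem stmt8 (ν : ℝ) (hν : 1 ≤ ν) (jm1 : ℕ → ℝ)
    (hjm1 : EnumPosZeros (besselJ (ν - 1)) jm1) :
    (∀ z : ℝ, 0 < z → z ≤ jm1 1 → 0 < besselJ (ν - 1) z + besselJ ν z) ∧
    (∀ z ∈ Set.Ioc (0 : ℝ) (jm1 1), besselJ (ν - 1) z + besselJ ν z ≠ 0) := by
  have hpos (z : ℝ) (hz : 0 < z) (hle : z ≤ jm1 1) : 0 < besselJ (ν - 1) z + besselJ ν z :=
    stmt8_general (by linarith) hz fun x hx => hjm1.ne_zero_of_lt_first hx.1 (hx.2.trans_le hle)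
  exact ⟨hpos, fun z hz => (hpos z hz.1 hz.2).ne'⟩
end
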